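/- Let ρ be a bipartite state on ℂ²⊗ℂ² (two qubits). Suppose there are an orthonormal basis {α_1, α_2} of ℂ², orthonormal unit vectors β_1, β_2 of ℂ², and p_1, p_2 > 0 with p_1 + p_2 = 1 such that Tr_A[ρ(|α_i⟩⟨α_i|⊗I)] = p_i|β_i⟩⟨β_i| for i = 1,2. Suppose further there are unit vectors α, β ∈ ℂ² and p > 0 with Tr_A[ρ(|α⟩⟨α|⊗I)] = p|β⟩⟨β|, where ⟨β_1, β⟩ ≠ 0 and ⟨β_2, β⟩ ≠ 0. Then ρ is a pure state (ρ has rank 1). -/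

import Mathlib

/-!
For a positive semidefinite `ρ`, a steered state `Tr_A[ρ(|a⟩⟨a| ⊗ I)] = p|b⟩⟨b|` forces
`ρ (a ⊗ c) = 0` whenever `c ⊥ b`, because `⟨a ⊗ c, ρ (a ⊗ c)⟩ = p |⟨b, c⟩|² = 0`. Hence
`ρ (αᵢ ⊗ c) = ⟨βᵢ, c⟩ vᵢ` with `vᵢ = ρ (αᵢ ⊗ βᵢ)`, and the range of `ρ` is spanned by the `vᵢ`.
The additional steered state annihilates `αv ⊗ γ` for `γ = ⟨βv, βₖ⟩ βⱼ - ⟨βv, βⱼ⟩ βₖ ⊥ βv`,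
and expanding `αv` in the basis `α` turns this into the proportionality
`⟨αⱼ, αv⟩ ⟨βv, βₖ⟩ vⱼ = ⟨αₖ, αv⟩ ⟨βv, βⱼ⟩ vₖ`. Since no `vᵢ` and no `⟨βv, βᵢ⟩` vanishes, all
`vᵢ` are multiples of a single vector, so `ρ` has rank one.
-/

open scoped BigOperators Kronecker Classical ComplexOrder

namespace EPR

noncomputable section

/-- Complex inner product `⟨u, v⟩ = ∑ conj (u a) * v a` (conjugate-linear in the first slot). -/
def cinner {ι : Type*} [Fintype ι] (u v : ι → ℂ) : ℂ :=
  ∑ a, (starRingEnd ℂ) (u a) * v a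

/-- `u` is a unit vector. -/
def IsUnitVec {ι : Type*} [Fintype ι] (u : ι → ℂ) : Prop := cinner u u = 1

/-- Rank-one projection `|u⟩⟨u|`, with entries `u k * conj (u l)`. -/
def proj {ι : Type*} [Fintype ι] (u : ι → ℂ) : Matrix ι ι ℂ :=
  Matrix.of fun k l => u k * (starRingEnd ℂ) (u l)

/-- Rank-one operator `|u⟩⟨v|`, with entries `u k * conj (v l)`. -/
def outer {ι : Type*} [Fintype ι] (u v : ι → ℂ) : Matrix ι ι ℂ :=
  Matrix.of fun k l => u k * (starRingEnd ℂ) (v l)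

/-- A state: positive semidefinite matrix of trace 1. -/
def IsState {ι : Type*} [Fintype ι] (ρ : Matrix ι ι ℂ) : Prop :=
  ρ.PosSemidef ∧ ρ.trace = 1

/-- An effect: `0 ≤ E ≤ I` in the Loewner order. -/
def IsEffect {d : ℕ} (E : Matrix (Fin d) (Fin d) ℂ) : Prop :=
  E.PosSemidef ∧ (1 - E).PosSemidef

/-- Conditional state `Tr_A[ρ (E ⊗ I_B)]` of a bipartite state for an effect `E` on A:
entries `(E')_{b b'} = ∑_{a,a'} E_{a' a} ρ_{(a,b),(a',b')}`. -/
def condStateE {dA dB : ℕ} (ρ : Matrix (Fin dA × Fin dB) (Fin dA × Fin dB) ℂ)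
    (E : Matrix (Fin dA) (Fin dA) ℂ) : Matrix (Fin dB) (Fin dB) ℂ :=
  Matrix.of fun b b' => ∑ a, ∑ a', E a' a * ρ (a, b) (a', b')

/-- Conditional state `Tr_A[ρ (|α⟩⟨α| ⊗ I_B)]` for a non-degenerate projective effect:
entries `∑_{a,a'} conj (α a) * α a' * ρ_{(a,b),(a',b')}`. -/
def condState {dA dB : ℕ} (ρ : Matrix (Fin dA × Fin dB) (Fin dA × Fin dB) ℂ)
    (α : Fin dA → ℂ) : Matrix (Fin dB) (Fin dB) ℂ :=
  Matrix.of fun b b' => ∑ a, ∑ a', (starRingEnd ℂ) (α a) * α a' * ρ (a, b) (a', b')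

/-- Tensor product vector `α ⊗ β` in `ℂ^{dA} ⊗ ℂ^{dB}`. -/
def tensor2 {dA dB : ℕ} (α : Fin dA → ℂ) (β : Fin dB → ℂ) : Fin dA × Fin dB → ℂ :=
  fun p => α p.1 * β p.2

/-- Tensor product vector `α ⊗ β ⊗ γ` in `ℂ^{dA} ⊗ ℂ^{dB} ⊗ ℂ^{dC}`. -/
def tensor3 {dA dB dC : ℕ} (α : Fin dA → ℂ) (β : Fin dB → ℂ) (γ : Fin dC → ℂ) :
    Fin dA × Fin dB × Fin dC → ℂ :=
  fun p => α p.1 * β p.2.1 * γ p.2.2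

/-- Reduced state of a tripartite pure state on AB:
`(ρ_Ψ)_{(a,b),(a',b')} = ∑_c Ψ_{a,b,c} conj (Ψ_{a',b',c})`. -/
def reducedAB {dA dB dC : ℕ} (Ψ : Fin dA × Fin dB × Fin dC → ℂ) :
    Matrix (Fin dA × Fin dB) (Fin dA × Fin dB) ℂ :=
  Matrix.of fun p q => ∑ c, Ψ (p.1, p.2, c) * (starRingEnd ℂ) (Ψ (q.1, q.2, c))

/-- Partial contraction `⟨α|Ψ⟩ ∈ ℂ^{dB} ⊗ ℂ^{dC}`, with components
`∑_a conj (α a) Ψ_{a,b,c}`. -/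
def aContract {dA dB dC : ℕ} (α : Fin dA → ℂ) (Ψ : Fin dA × Fin dB × Fin dC → ℂ) :
    Fin dB × Fin dC → ℂ :=
  fun p => ∑ a, (starRingEnd ℂ) (α a) * Ψ (a, p.1, p.2)

/-- A family of vectors is orthonormal. For `n = d` this is an orthonormal basis of `ℂ^d`. -/
def OrthonormalFam {d n : ℕ} (α : Fin n → Fin d → ℂ) : Prop :=
  ∀ i j, cinner (α i) (α j) = if i = j then 1 else 0

/-- `ρ` is unsteerable from Alice's side for non-degenerate projective measurements:
there is a finite local-hidden-state ensemble reproducing all conditional states of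
every non-degenerate projective measurement (orthonormal basis) on A. -/
def Unsteerable {dA dB : ℕ} (ρ : Matrix (Fin dA × Fin dB) (Fin dA × Fin dB) ℂ) : Prop :=
  ∃ (n : ℕ) (P : Fin n → ℝ) (σ : Fin n → Matrix (Fin dB) (Fin dB) ℂ),
    (∀ ξ, 0 ≤ P ξ) ∧ (∑ ξ, P ξ = 1) ∧ (∀ ξ, IsState (σ ξ)) ∧
    ∀ α : Fin dA → Fin dA → ℂ, OrthonormalFam α →
      ∃ Q : Fin dA → Fin n → ℝ,
        (∀ a ξ, 0 ≤ Q a ξ ∧ Q a ξ ≤ 1) ∧ (∀ ξ, ∑ a, Q a ξ = 1) ∧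
        ∀ a, condState ρ (α a) = ∑ ξ, ((Q a ξ * P ξ : ℝ) : ℂ) • σ ξ

/-- `ρ` is separable: a finite convex-type combination of product states. -/
def Separable {dA dB : ℕ} (ρ : Matrix (Fin dA × Fin dB) (Fin dA × Fin dB) ℂ) : Prop :=
  ∃ (n : ℕ) (q : Fin n → ℝ) (ρA : Fin n → Matrix (Fin dA) (Fin dA) ℂ)
    (ρB : Fin n → Matrix (Fin dB) (Fin dB) ℂ),
    (∀ k, 0 ≤ q k) ∧ (∀ k, IsState (ρA k)) ∧ (∀ k, IsState (ρB k)) ∧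
    ρ = ∑ k, ((q k : ℂ)) • (ρA k ⊗ₖ ρB k)

/-- A local hidden state model for an assemblage `As`, with outcomes `A`, measurement
labels `X`, hidden states `σ` with weights `P`, and response probabilities `R`. -/
def LHSModel {dB : ℕ} {A X : Type*} [Fintype A] {n : ℕ}
    (As : A → X → Matrix (Fin dB) (Fin dB) ℂ)
    (P : Fin n → ℝ) (σ : Fin n → Matrix (Fin dB) (Fin dB) ℂ)
    (R : A → X → Fin n → ℝ) : Prop :=
  (∀ ξ, 0 ≤ P ξ) ∧ (∑ ξ, P ξ = 1) ∧ (∀ ξ, IsState (σ ξ)) ∧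
  (∀ a x ξ, 0 ≤ R a x ξ ∧ R a x ξ ≤ 1) ∧ (∀ x ξ, ∑ a, R a x ξ = 1) ∧
  (∀ a x, As a x = ∑ ξ, ((R a x ξ * P ξ : ℝ) : ℂ) • σ ξ)

/-- Standard basis vector of `ℂ^d`. -/
def stdb {d : ℕ} (a : Fin d) : Fin d → ℂ := fun i => if i = a then 1 else 0

open Matrix

section InnerProduct

variable {ι : Type*} [Fintype ι]

lemma cinner_eq_star_dotProduct (u v : ι → ℂ) : cinner u v = star u ⬝ᵥ v := rfl

lemma proj_eq_vecMulVec (u : ι → ℂ) : proj u = vecMulVec u (star u) := rfl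

lemma star_cinner (u v : ι → ℂ) : star (cinner u v) = cinner v u :=
  (star_dotProduct v u).symm

lemma cinner_sub_smul_smul (u v w : ι → ℂ) (s t : ℂ) :
    cinner u (s • v - t • w) = s * cinner u v - t * cinner u w := by
  simp only [cinner_eq_star_dotProduct, dotProduct_sub, dotProduct_smul, smul_eq_mul]

lemma exists_isUnitVec_smul {w : ι → ℂ} (hw : w ≠ 0) :
    ∃ t : ℂ, t ≠ 0 ∧ IsUnitVec (t • w) := by
  have hpos : 0 < star w ⬝ᵥ w := dotProduct_star_self_pos_iff.mpr hw
  obtain ⟨r, hr, hrw⟩ : ∃ r : ℝ, 0 < r ∧ (r : ℂ) = star w ⬝ᵥ w :=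
    RCLike.pos_iff_exists_ofReal.mp hpos
  have hsqrt : ((√r : ℝ) : ℂ) ≠ 0 := by exact_mod_cast (Real.sqrt_pos.mpr hr).ne'
  have hmul : ((√r : ℝ) : ℂ) * (√r : ℝ) = r := by exact_mod_cast Real.mul_self_sqrt hr.le
  refine ⟨((√r : ℝ) : ℂ)⁻¹, inv_ne_zero hsqrt, ?_⟩
  rw [IsUnitVec, cinner_eq_star_dotProduct, star_smul, smul_dotProduct, dotProduct_smul, ← hrw,
    ← hmul]
  simp [hsqrt]

end InnerProduct

section Purity

variable {ι : Type*} [Fintype ι] {ρ : Matrix ι ι ℂ}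

-- The trace gives `ρ Ψ = Ψ`, and evaluating `ρ = ρᴴ = |star f⟩⟨Ψ|` at `Ψ` gives `star f = Ψ`.
lemma eq_proj_of_isHermitian_of_eq_vecMulVec (hρ : ρ.IsHermitian) (htr : ρ.trace = 1)
    {Ψ f : ι → ℂ} (hΨ : IsUnitVec Ψ) (hf : ρ = vecMulVec Ψ f) : ρ = proj Ψ := by
  have hfix : ρ *ᵥ Ψ = Ψ := by
    rw [hf, trace_vecMulVec, dotProduct_comm] at htr
    simp [hf, vecMulVec_mulVec, htr]
  have hadj : ρ = vecMulVec (star f) (star Ψ) := by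
    rw [← hρ.eq, hf, conjTranspose_vecMulVec]
  have hstar : star f = Ψ := by
    rw [IsUnitVec, cinner_eq_star_dotProduct] at hΨ
    rw [hadj, vecMulVec_mulVec, hΨ] at hfix
    simpa using hfix
  rw [hadj, hstar, proj_eq_vecMulVec]

lemma IsState.exists_eq_proj_of_eq_vecMulVec (hρ : IsState ρ) {w f : ι → ℂ}
    (hf : ρ = vecMulVec w f) : ∃ Ψ : ι → ℂ, IsUnitVec Ψ ∧ ρ = proj Ψ := by
  obtain ⟨hpos, htr⟩ := hρ
  have hw : w ≠ 0 := by
    rintro rfl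
    simp [hf] at htr
  obtain ⟨t, ht, hunit⟩ := exists_isUnitVec_smul hw
  refine ⟨t • w, hunit, eq_proj_of_isHermitian_of_eq_vecMulVec hpos.isHermitian htr hunit
    (f := t⁻¹ • f) ?_⟩
  rw [smul_vecMulVec, vecMulVec_smul, smul_inv_smul₀ ht, hf]

end Purity

section Tensor

variable {dA dB : ℕ}

lemma tensor2_sub_right (a : Fin dA → ℂ) (b c : Fin dB → ℂ) :
    tensor2 a (b - c) = tensor2 a b - tensor2 a c :=
  funext fun _ => mul_sub _ _ _

lemma tensor2_smul_right (t : ℂ) (a : Fin dA → ℂ) (b : Fin dB → ℂ) :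
    tensor2 a (t • b) = t • tensor2 a b :=
  funext fun _ => mul_left_comm _ _ _

lemma tensor2_sum_smul_left {ι : Type*} [Fintype ι] (t : ι → ℂ) (α : ι → Fin dA → ℂ)
    (b : Fin dB → ℂ) : tensor2 (∑ i, t i • α i) b = ∑ i, t i • tensor2 (α i) b := by
  ext x
  simp only [tensor2, Finset.sum_apply, Pi.smul_apply, smul_eq_mul, Finset.sum_mul, mul_assoc]

lemma tensor2_single_one (q : Fin dA × Fin dB) :
    tensor2 (Pi.single q.1 1) (Pi.single q.2 1) = Pi.single q 1 := by
  ext x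
  simp only [tensor2, Pi.single_apply, Prod.ext_iff, ite_and, ite_mul, one_mul, zero_mul]

end Tensor

lemma OrthonormalFam.isUnitVec {d n : ℕ} {β : Fin n → Fin d → ℂ} (hβ : OrthonormalFam β)
    (i : Fin n) : IsUnitVec (β i) :=
  (hβ i i).trans (if_pos rfl)

section OrthonormalBasis

variable {n : ℕ} {α : Fin n → Fin n → ℂ}

lemma OrthonormalFam.eq_sum_cinner_smul (hα : OrthonormalFam α) (u : Fin n → ℂ) :
    u = ∑ i, cinner (α i) u • α i := by
  have hgram : (of α).map star * (of α)ᵀ = 1 := by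
    ext i j
    simpa [mul_apply, one_apply, cinner] using hα i j
  calc u = ((of α)ᵀ * (of α).map star) *ᵥ u := by rw [mul_eq_one_comm.mp hgram, one_mulVec]
    _ = (of α)ᵀ *ᵥ fun i => cinner (α i) u := (mulVec_mulVec _ _ _).symm
    _ = ∑ i, cinner (α i) u • α i := by
      ext k
      simp [mulVec, dotProduct, mul_comm]

lemma OrthonormalFam.exists_cinner_ne_zero (hα : OrthonormalFam α) {u : Fin n → ℂ} (hu : u ≠ 0) :
    ∃ i, cinner (α i) u ≠ 0 := by
  by_contra! hzero
  exact hu (by rw [hα.eq_sum_cinner_smul u]; simp [hzero])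

lemma OrthonormalFam.exists_eq_vecMulVec (hα : OrthonormalFam α) {d : ℕ}
    {ρ : Matrix (Fin n × Fin d) (Fin n × Fin d) ℂ} {w : Fin n × Fin d → ℂ}
    (hw : ∀ i c, ρ *ᵥ tensor2 (α i) c ∈ ℂ ∙ w) :
    ∃ f : Fin n × Fin d → ℂ, ρ = vecMulVec w f := by
  have hcol : ∀ q, ρ.col q ∈ ℂ ∙ w := by
    intro q
    rw [← mulVec_single_one, ← tensor2_single_one, hα.eq_sum_cinner_smul (Pi.single q.1 1),
      tensor2_sum_smul_left, mulVec_sum]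
    refine Submodule.sum_mem _ fun i _ => ?_
    rw [mulVec_smul]
    exact Submodule.smul_mem _ _ (hw i _)
  choose f hf using fun q => Submodule.mem_span_singleton.mp (hcol q)
  refine ⟨f, ext_col fun q => ?_⟩
  rw [col_vecMulVec, ← hf]
  ext; simp [mul_comm]

end OrthonormalBasis

section Steering

variable {dA dB : ℕ} {ρ : Matrix (Fin dA × Fin dB) (Fin dA × Fin dB) ℂ}

lemma star_tensor2_dotProduct_mulVec_tensor2 (ρ : Matrix (Fin dA × Fin dB) (Fin dA × Fin dB) ℂ)
    (a : Fin dA → ℂ) (c : Fin dB → ℂ) :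
    star (tensor2 a c) ⬝ᵥ ρ *ᵥ tensor2 a c = star c ⬝ᵥ condState ρ a *ᵥ c := by
  calc star (tensor2 a c) ⬝ᵥ ρ *ᵥ tensor2 a c
      = ∑ i, ∑ k, ∑ j, ∑ l, star (c k) * (star (a i) * a j * ρ (i, k) (j, l) * c l) := by
        simp only [dotProduct, mulVec, tensor2, Fintype.sum_prod_type, Finset.mul_sum,
          Pi.star_apply, star_mul']
        congr! 4
        ring
    _ = ∑ k, ∑ l, ∑ i, ∑ j, star (c k) * (star (a i) * a j * ρ (i, k) (j, l) * c l) := by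
        rw [Finset.sum_comm]
        exact Finset.sum_congr rfl fun k _ => Finset.sum_comm_cycle
    _ = star c ⬝ᵥ condState ρ a *ᵥ c := by
        simp only [dotProduct, mulVec, condState, of_apply, Finset.mul_sum, Finset.sum_mul,
          Pi.star_apply, Complex.star_def]

variable {a : Fin dA → ℂ} {b : Fin dB → ℂ} {p : ℂ}

lemma star_tensor2_dotProduct_mulVec_tensor2_of_condState
    (h : condState ρ a = p • proj b) (c : Fin dB → ℂ) :
    star (tensor2 a c) ⬝ᵥ ρ *ᵥ tensor2 a c = p * (cinner b c * cinner c b) := by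
  rw [star_tensor2_dotProduct_mulVec_tensor2, h, proj_eq_vecMulVec, smul_mulVec, vecMulVec_mulVec]
  simp [cinner_eq_star_dotProduct]

lemma mulVec_tensor2_eq_zero (hρ : ρ.PosSemidef) (h : condState ρ a = p • proj b)
    {c : Fin dB → ℂ} (hc : cinner b c = 0) : ρ *ᵥ tensor2 a c = 0 := by
  rw [← hρ.dotProduct_mulVec_zero_iff, star_tensor2_dotProduct_mulVec_tensor2_of_condState h, hc,
    zero_mul, mul_zero]

lemma mulVec_tensor2_eq_cinner_smul (hρ : ρ.PosSemidef) (h : condState ρ a = p • proj b)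
    (hb : IsUnitVec b) (c : Fin dB → ℂ) :
    ρ *ᵥ tensor2 a c = cinner b c • ρ *ᵥ tensor2 a b := by
  have horth : cinner b ((1 : ℂ) • c - cinner b c • b) = 0 := by
    rw [cinner_sub_smul_smul, hb, one_mul, mul_one, sub_self]
  have hzero := mulVec_tensor2_eq_zero hρ h horth
  rwa [one_smul, tensor2_sub_right, tensor2_smul_right, mulVec_sub, mulVec_smul, sub_eq_zero]
    at hzero

lemma mulVec_tensor2_ne_zero (h : condState ρ a = p • proj b) (hb : IsUnitVec b) (hp : p ≠ 0) :
    ρ *ᵥ tensor2 a b ≠ 0 := by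
  intro hzero
  have hform := star_tensor2_dotProduct_mulVec_tensor2_of_condState h b
  rw [hzero, dotProduct_zero, hb, mul_one, mul_one] at hform
  exact hp hform.symm

end Steering

section SteeredBasis

variable {n d : ℕ} {ρ : Matrix (Fin n × Fin d) (Fin n × Fin d) ℂ}
  {α : Fin n → Fin n → ℂ} {β : Fin n → Fin d → ℂ} {p : Fin n → ℂ}
  {αv : Fin n → ℂ} {βv : Fin d → ℂ} {pv : ℂ}

lemma mulVec_tensor2_eq_sum (hρ : ρ.PosSemidef) (hα : OrthonormalFam α)
    (hβ : ∀ i, IsUnitVec (β i)) (h : ∀ i, condState ρ (α i) = p i • proj (β i))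
    (u : Fin n → ℂ) (c : Fin d → ℂ) :
    ρ *ᵥ tensor2 u c =
      ∑ i, (cinner (α i) u * cinner (β i) c) • ρ *ᵥ tensor2 (α i) (β i) := by
  conv_lhs => rw [hα.eq_sum_cinner_smul u, tensor2_sum_smul_left, mulVec_sum]
  refine Finset.sum_congr rfl fun i _ => ?_
  rw [mulVec_smul, mulVec_tensor2_eq_cinner_smul hρ (h i) (hβ i) c, smul_smul]

lemma smul_mulVec_tensor2_comm (hρ : ρ.PosSemidef) (hα : OrthonormalFam α)
    (hβ : OrthonormalFam β) (h : ∀ i, condState ρ (α i) = p i • proj (β i))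
    (hv : condState ρ αv = pv • proj βv) (j k : Fin n) :
    (cinner (α j) αv * cinner βv (β k)) • ρ *ᵥ tensor2 (α j) (β j) =
      (cinner (α k) αv * cinner βv (β j)) • ρ *ᵥ tensor2 (α k) (β k) := by
  set γ := cinner βv (β k) • β j - cinner βv (β j) • β k
  have hγ : cinner βv γ = 0 := by
    rw [cinner_sub_smul_smul, mul_comm, sub_self]
  have hcoord (i : Fin n) : cinner (β i) γ =
      (if i = j then cinner βv (β k) else 0) - if i = k then cinner βv (β j) else 0 := by
    simp only [γ, cinner_sub_smul_smul, hβ i, mul_ite, mul_one, mul_zero]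
  have hzero : ρ *ᵥ tensor2 αv γ = 0 := mulVec_tensor2_eq_zero hρ hv hγ
  rw [mulVec_tensor2_eq_sum hρ hα hβ.isUnitVec h] at hzero
  simpa [hcoord, mul_sub, sub_smul, ite_smul, sub_eq_zero] using hzero

-- Both sides of `smul_mulVec_tensor2_comm` are nonzero, so `⟨αⱼ, αv⟩ ≠ 0` for every `j`.
lemma mulVec_tensor2_mem_span_singleton (hρ : ρ.PosSemidef) (hα : OrthonormalFam α)
    (hβ : OrthonormalFam β) (hp : ∀ i, p i ≠ 0)
    (h : ∀ i, condState ρ (α i) = p i • proj (β i)) (hv : condState ρ αv = pv • proj βv)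
    (hβv : ∀ i, cinner (β i) βv ≠ 0) {k : Fin n} (hk : cinner (α k) αv ≠ 0) (j : Fin n) :
    ρ *ᵥ tensor2 (α j) (β j) ∈ ℂ ∙ ρ *ᵥ tensor2 (α k) (β k) := by
  have hcomm := smul_mulVec_tensor2_comm hρ hα hβ h hv j k
  have hβv' : cinner βv (β j) ≠ 0 := by
    rw [← star_cinner]
    exact star_ne_zero.mpr (hβv j)
  have hcoeff : cinner (α j) αv * cinner βv (β k) ≠ 0 := by
    refine (smul_ne_zero_iff.mp (hcomm.trans_ne ?_)).1
    exact smul_ne_zero (mul_ne_zero hk hβv')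
      (mulVec_tensor2_ne_zero (h k) (hβ.isUnitVec k) (hp k))
  rw [← Submodule.smul_mem_iff _ hcoeff, hcomm]
  exact Submodule.smul_mem _ _ (Submodule.mem_span_singleton_self _)

end SteeredBasis

theorem stmt10_general {n d : ℕ} (ρ : Matrix (Fin n × Fin d) (Fin n × Fin d) ℂ) (hρ : IsState ρ)
    (α : Fin n → Fin n → ℂ) (hα : OrthonormalFam α)
    (β : Fin n → Fin d → ℂ) (hβ : OrthonormalFam β)
    (p : Fin n → ℝ) (hp : ∀ i, 0 < p i)
    (h : ∀ i, condState ρ (α i) = (p i : ℂ) • proj (β i))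
    (αv : Fin n → ℂ) (βv : Fin d → ℂ) (hαv : αv ≠ 0)
    (pv : ℝ) (hc : condState ρ αv = (pv : ℂ) • proj βv)
    (hβv : ∀ i, cinner (β i) βv ≠ 0) :
    ∃ Ψ : Fin n × Fin d → ℂ, IsUnitVec Ψ ∧ ρ = proj Ψ := by
  have hp' : ∀ i, (p i : ℂ) ≠ 0 := fun i => Complex.ofReal_ne_zero.mpr (hp i).ne'
  obtain ⟨k, hk⟩ := hα.exists_cinner_ne_zero hαv
  have hspan (i : Fin n) (c : Fin d → ℂ) :
      ρ *ᵥ tensor2 (α i) c ∈ ℂ ∙ ρ *ᵥ tensor2 (α k) (β k) := by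
    rw [mulVec_tensor2_eq_cinner_smul hρ.1 (h i) (hβ.isUnitVec i) c]
    exact Submodule.smul_mem _ _ (mulVec_tensor2_mem_span_singleton hρ.1 hα hβ hp' h hc hβv hk i)
  obtain ⟨f, hf⟩ := hα.exists_eq_vecMulVec hspan
  exact hρ.exists_eq_proj_of_eq_vecMulVec hf

/-- for a two-qubit state, two orthogonal pure steered states with
probabilities summing to 1 plus one more pure steered state (non-orthogonal to both)
force the shared state to be pure. -/
theorem stmt10 (ρ : Matrix (Fin 2 × Fin 2) (Fin 2 × Fin 2) ℂ) (hρ : IsState ρ)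
    (α : Fin 2 → Fin 2 → ℂ) (hα : OrthonormalFam α)
    (β : Fin 2 → Fin 2 → ℂ) (hβ : OrthonormalFam β)
    (p : Fin 2 → ℝ) (hp : ∀ i, 0 < p i) (hsum : p 0 + p 1 = 1)
    (h : ∀ i, condState ρ (α i) = (p i : ℂ) • proj (β i))
    (αv βv : Fin 2 → ℂ) (hαv : IsUnitVec αv) (hβv : IsUnitVec βv)
    (pv : ℝ) (hpv : 0 < pv) (hc : condState ρ αv = (pv : ℂ) • proj βv)
    (h0 : cinner (β 0) βv ≠ 0) (h1 : cinner (β 1) βv ≠ 0) :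
    ∃ Ψ : Fin 2 × Fin 2 → ℂ, IsUnitVec Ψ ∧ ρ = proj Ψ := by
  have hαv_ne : αv ≠ 0 := by rintro rfl; simp [IsUnitVec, cinner] at hαv
  exact stmt10_general ρ hρ α hα β hβ p hp h αv βv hαv_ne pv hc (Fin.forall_fin_two.mpr ⟨h0, h1⟩)

end

end EPR
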